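/- Let ν be a real number with ν ≥ 1 and let k ≥ 1. Then J_{ν−1}(z) − J_ν(z) ≠ 0 for every z in the closed interval [j_{ν−1,k}, j_{ν,k}], where j_{ν−1,k} and j_{ν,k} are the k-th positive zeroes of J_{ν−1} and J_ν respectively. -/

import Mathlib

/-- Bessel function of the first kind of real order `ν`, defined via its power series
`J_ν(z) = ∑ₘ (−1)^m / (m! Γ(ν+m+1)) (z/2)^(ν+2m)` (with real-exponent powers). -/
noncomputable def besselJ (ν z : ℝ) : ℝ :=
  ∑' m : ℕ, ((-1 : ℝ) ^ m / (Nat.factorial m * Real.Gamma (ν + m + 1))) *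
    (z / 2) ^ (ν + 2 * (m : ℝ))

/-- `x` (indexed by `k ≥ 1`) enumerates the positive zeroes of `f`: it is strictly
increasing on indices `k ≥ 1`, each `x k` is a positive zero of `f`, and every positive
zero of `f` is some `x k`. -/
def EnumPosZeros (f : ℝ → ℝ) (x : ℕ → ℝ) : Prop :=
  StrictMonoOn x (Set.Ici 1) ∧ (∀ k, 1 ≤ k → 0 < x k ∧ f (x k) = 0) ∧
    ∀ z : ℝ, 0 < z → f z = 0 → ∃ k, 1 ≤ k ∧ x k = z

/-- Reduced Bessel series. -/
noncomputable def bE (μ s : ℝ) : ℝ :=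
  ∑' m : ℕ, ((-1 : ℝ) ^ m / (Nat.factorial m * Real.Gamma (μ + m + 1))) * s ^ m

lemma bGamma_lb (μ : ℝ) (hμ : 0 ≤ μ) (m : ℕ) :
    Real.Gamma (μ + 1) ≤ Real.Gamma (μ + m + 1) := by
  induction m with
  | zero => simp
  | succ n ih =>
    have h : μ + ((n + 1 : ℕ) : ℝ) + 1 = (μ + n + 1) + 1 := by push_cast; ring
    have hp : 0 < μ + n + 1 := by positivity
    rw [h, Real.Gamma_add_one hp.ne']
    have := Real.Gamma_pos_of_pos hp
    have h1 : (1 : ℝ) ≤ μ + n + 1 := by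
      have : (0 : ℝ) ≤ n := n.cast_nonneg
      linarith
    nlinarith

lemma bcoef_bound (μ : ℝ) (hμ : 0 ≤ μ) (m : ℕ) (s R : ℝ) (hs : |s| ≤ R) :
    ‖((-1 : ℝ) ^ m / (Nat.factorial m * Real.Gamma (μ + m + 1))) * s ^ m‖ ≤
      R ^ m / Nat.factorial m * (Real.Gamma (μ + 1))⁻¹ := by
  have hG : 0 < Real.Gamma (μ + 1) := Real.Gamma_pos_of_pos (by linarith)
  have hG2 := bGamma_lb μ hμ m
  have hG3 : 0 < Real.Gamma (μ + m + 1) := by linarith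
  have hf : (0 : ℝ) < Nat.factorial m := by positivity
  rw [norm_mul, norm_div, norm_pow, norm_pow, norm_mul]
  simp only [norm_neg, norm_one, one_pow, Real.norm_eq_abs, abs_of_pos hG3, abs_of_pos hf]
  have h1 : |s| ^ m ≤ R ^ m := pow_le_pow_left₀ (abs_nonneg _) hs m
  have h2 : (Real.Gamma (μ + m + 1))⁻¹ ≤ (Real.Gamma (μ + 1))⁻¹ := inv_anti₀ hG hG2
  calc _ = |s| ^ m / Nat.factorial m * (Real.Gamma (μ + m + 1))⁻¹ := by field_simp
    _ ≤ _ := by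
      have : 0 ≤ R ^ m := (pow_nonneg (abs_nonneg s) m).trans h1
      gcongr

lemma bE_summable (μ : ℝ) (hμ : 0 ≤ μ) (s : ℝ) :
    Summable fun m : ℕ =>
      ((-1 : ℝ) ^ m / (Nat.factorial m * Real.Gamma (μ + m + 1))) * s ^ m :=
  Summable.of_norm_bounded ((Real.summable_pow_div_factorial |s|).mul_right _)
    fun m => bcoef_bound μ hμ m s _ le_rfl

lemma bterm_succ (μ s : ℝ) (m : ℕ) :
    ((-1 : ℝ) ^ (m + 1) / (Nat.factorial (m + 1) * Real.Gamma (μ + (m + 1 : ℕ) + 1))) *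
      (((m + 1 : ℕ) : ℝ) * s ^ m) =
    -(((-1 : ℝ) ^ m / (Nat.factorial m * Real.Gamma (μ + 1 + m + 1))) * s ^ m) := by
  have h : μ + ((m + 1 : ℕ) : ℝ) + 1 = μ + 1 + m + 1 := by push_cast; ring
  rw [h, Nat.factorial_succ, pow_succ]
  have : ((m + 1 : ℕ) : ℝ) ≠ 0 := by positivity
  rw [Nat.cast_mul]
  generalize ((m + 1 : ℕ) : ℝ) = x at *
  by_cases hG : Real.Gamma (μ + 1 + m + 1) = 0
  · simp [hG]
  · field_simp

lemma bE_deriv (μ : ℝ) (hμ : 0 ≤ μ) (s : ℝ) :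
    HasDerivAt (bE μ) (-bE (μ + 1) s) s := by
  set g' : ℕ → ℝ → ℝ := fun m y =>
    ((-1 : ℝ) ^ m / (Nat.factorial m * Real.Gamma (μ + m + 1))) * ((m : ℝ) * y ^ (m - 1)) with hg'
  have hsucc : ∀ m y, g' (m + 1) y =
      -(((-1 : ℝ) ^ m / (Nat.factorial m * Real.Gamma (μ + 1 + m + 1))) * y ^ m) := by
    intro m y
    simpa [hg'] using bterm_succ μ y m
  set R := |s| + 1 with hR
  set u : ℕ → ℝ := fun m => match m with
    | 0 => 0
    | m + 1 => R ^ m / Nat.factorial m * (Real.Gamma (μ + 1 + 1))⁻¹ with hu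
  have hus : Summable u := by
    rw [← summable_nat_add_iff 1]
    exact (Real.summable_pow_div_factorial R).mul_right _
  have key := hasDerivAt_tsum_of_isPreconnected (𝕜 := ℝ) (u := u)
    (g := fun (m : ℕ) (y : ℝ) =>
      ((-1 : ℝ) ^ m / (Nat.factorial m * Real.Gamma (μ + m + 1))) * y ^ m)
    (g' := g') (t := Set.Ioo (-R) R) (y₀ := s) (y := s) hus isOpen_Ioo isPreconnected_Ioo
    (fun n y _ => (hasDerivAt_pow n y).const_mul _)
    (by
      intro n y hy
      cases n with
      | zero => simp [hg', hu]
      | succ m =>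
        rw [hsucc, norm_neg]
        exact bcoef_bound (μ + 1) (by linarith) m y R (abs_le.2 ⟨hy.1.le, hy.2.le⟩))
    (by constructor <;> [linarith [neg_abs_le s]; linarith [le_abs_self s]])
    (bE_summable μ hμ s)
    (by constructor <;> [linarith [neg_abs_le s]; linarith [le_abs_self s]])
  have hs2 : Summable fun m => g' m s := by
    rw [← summable_nat_add_iff 1]
    simp only [hsucc]
    exact (bE_summable (μ + 1) (by linarith) s).neg
  have : ∑' m, g' m s = -bE (μ + 1) s := by
    rw [hs2.tsum_eq_zero_add]
    simp only [hsucc, tsum_neg]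
    simp [hg', bE]
  rw [this] at key
  exact key

lemma bE_rec (μ : ℝ) (hμ : 1 ≤ μ) (s : ℝ) :
    bE (μ - 1) s = μ * bE μ s - s * bE (μ + 1) s := by
  have h1 := bE_summable μ (by linarith) s
  have h2 := bE_summable (μ + 1) (by linarith) s
  have h0 := bE_summable (μ - 1) (by linarith) s
  set d : ℕ → ℝ := fun m =>
    ((-1 : ℝ) ^ m / (Nat.factorial m * Real.Gamma (μ + m + 1))) * ((m : ℝ) * s ^ m) with hd
  have hsucc : ∀ m, d (m + 1) =
      -s * (((-1 : ℝ) ^ m / (Nat.factorial m * Real.Gamma (μ + 1 + m + 1))) * s ^ m) := by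
    intro m
    have := bterm_succ μ s m
    simp only [hd]
    rw [pow_succ s]
    linear_combination s * this
  have hds : Summable d := by
    rw [← summable_nat_add_iff 1]
    simp only [hsucc]
    exact h2.mul_left _
  have hdt : ∑' m, d m = -s * bE (μ + 1) s := by
    rw [hds.tsum_eq_zero_add]
    simp only [hsucc, tsum_mul_left]
    simp [hd, bE]
  have : bE (μ - 1) s = μ * bE μ s + ∑' m, d m := by
    unfold bE
    rw [← tsum_mul_left, ← (h1.mul_left μ).tsum_add hds]
    congr 1
    ext m
    have e : μ - 1 + (m : ℝ) + 1 = μ + m := by ring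
    have hp : 0 < μ + m := by positivity
    have hG := Real.Gamma_pos_of_pos hp
    rw [e, hd]
    simp only
    rw [Real.Gamma_add_one hp.ne']
    field_simp
  rw [this, hdt]; ring

lemma besselJ_eq (μ z : ℝ) (hz : 0 < z) :
    besselJ μ z = (z / 2) ^ μ * bE μ ((z / 2) ^ 2) := by
  unfold besselJ bE
  rw [← tsum_mul_left]
  congr 1
  ext m
  rw [Real.rpow_add (by positivity), ← pow_mul]
  have : (z / 2) ^ (2 * (m : ℝ)) = (z / 2) ^ (2 * m) := by
    rw [← Real.rpow_natCast]; push_cast; rfl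
  rw [this]; ring

section abstractPart
variable {f g p q : ℝ → ℝ}

lemma ab_mvt (hp : ∀ z, 0 < z → 0 < p z)
    (hf : ∀ z, 0 < z → HasDerivAt f (p z * g z) z) {u v : ℝ} (hu : 0 < u) (huv : u < v) :
    ∃ c ∈ Set.Ioo u v, ∃ t > 0, f v - f u = t * g c := by
  obtain ⟨c, hc, h⟩ := exists_hasDerivAt_eq_slope f (fun z => p z * g z) huv
    (fun x hx => (hf x (hu.trans_le hx.1)).continuousAt.continuousWithinAt)
    (fun x hx => hf x (hu.trans hx.1))
  have hvu : 0 < v - u := by linarith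
  refine ⟨c, hc, p c * (v - u), mul_pos (hp c (hu.trans hc.1)) hvu, ?_⟩
  rw [eq_div_iff hvu.ne'] at h
  linarith

lemma ab_sign (hg : ∀ z, 0 < z → ContinuousAt g z) {u v : ℝ} (hu : 0 < u)
    (huv : u ≤ v) (hne : ∀ z ∈ Set.Icc u v, g z ≠ 0) : 0 < g u * g v := by
  by_contra hcon
  have hc : ContinuousOn g (Set.uIcc u v) := by
    rw [Set.uIcc_of_le huv]
    exact fun x hx => (hg x (hu.trans_le hx.1)).continuousWithinAt
  have hs := intermediate_value_uIcc hc
  have h0 : (0 : ℝ) ∈ Set.uIcc (g u) (g v) := by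
    rw [Set.mem_uIcc]
    by_contra hh
    push Not at hh
    apply hcon
    rcases lt_trichotomy (g u) 0 with h | h | h
    · exact mul_pos_of_neg_of_neg h (hh.1 h.le)
    · exact absurd h (hne u ⟨le_rfl, huv⟩)
    · rcases lt_or_ge 0 (g v) with h' | h'
      · exact mul_pos h h'
      · exact absurd (hh.2 h') (not_lt.2 h.le)
  obtain ⟨x, hx, hx0⟩ := hs h0
  rw [Set.uIcc_of_le huv] at hx
  exact hne x hx hx0

lemma ab_nocommon (hp : ∀ z, 0 < z → 0 < p z) (hq : ∀ z, 0 < z → 0 < q z)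
    (hf : ∀ z, 0 < z → HasDerivAt f (p z * (-g z)) z)
    (hg : ∀ z, 0 < z → HasDerivAt g (q z * f z) z)
    {l c : ℝ} (hl : 0 ≤ l) (hlc : l < c) (hne : ∀ z ∈ Set.Ioo l c, g z ≠ 0)
    (hfc : f c = 0) (hgc : g c = 0) : False := by
  obtain ⟨t, ht1, ht2⟩ := exists_between hlc
  obtain ⟨c2, hc2, a, ha, e1⟩ := ab_mvt hq hg (hl.trans_lt ht1) ht2
  obtain ⟨c3, hc3, b, hb, e2⟩ := ab_mvt (g := fun z => -g z) hp hf
    (hl.trans_lt (ht1.trans hc2.1)) hc2.2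
  have hs := ab_sign (g := g) (fun z hz => (hg z hz).continuousAt) (hl.trans_lt ht1)
    (hc2.1.trans hc3.1).le
    (fun z hz => hne z ⟨ht1.trans_le hz.1, hz.2.trans_lt hc3.2⟩)
  rw [hgc] at e1
  rw [hfc] at e2
  have e3 : f c2 = b * g c3 := by linarith
  have e4 : g t = -(a * (b * g c3)) := by rw [← e3]; linarith
  rw [e4] at hs
  have : 0 ≤ a * b * (g c3 * g c3) := mul_nonneg (mul_pos ha hb).le (mul_self_nonneg _)
  nlinarith

theorem ab_main (hp : ∀ z, 0 < z → 0 < p z) (hq : ∀ z, 0 < z → 0 < q z)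
    (hf : ∀ z, 0 < z → HasDerivAt f (p z * (-g z)) z)
    (hg : ∀ z, 0 < z → HasDerivAt g (q z * f z) z)
    (x y : ℕ → ℝ) (hx : EnumPosZeros f x) (hy : EnumPosZeros g y)
    (k : ℕ) (hk : 1 ≤ k) (z : ℝ) (hz : z ∈ Set.Icc (x k) (y k)) :
    (f z ≠ 0 ∨ g z ≠ 0) ∧ f z * g z ≤ 0 := by
  obtain ⟨hxm, hx0, hxs⟩ := hx
  obtain ⟨hym, hy0, hys⟩ := hy
  -- Rolle step
  have roll : ∀ i, 1 ≤ i → ∃ w ∈ Set.Ioo (x i) (x (i + 1)), g w = 0 := by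
    intro i hi
    have hlt : x i < x (i + 1) := hxm (Set.mem_Ici.2 hi) (Set.mem_Ici.2 (by omega)) (by omega)
    obtain ⟨c, hc, t, ht, e⟩ := ab_mvt (g := fun z => -g z) hp hf (hx0 i hi).1 hlt
    refine ⟨c, hc, ?_⟩
    rw [(hx0 i hi).2, (hx0 (i + 1) (by omega)).2] at e
    have : t * (-g c) = 0 := by simpa using e.symm
    rcases mul_eq_zero.1 this with h | h
    · exact absurd h ht.ne'
    · linarith
  have idx : ∀ i, 1 ≤ i → ∃ m, i ≤ m ∧ x i < y m ∧ y m < x (i + 1) := by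
    intro i hi
    induction i, hi using Nat.le_induction with
    | base =>
      obtain ⟨w, hw, hw0⟩ := roll 1 le_rfl
      obtain ⟨m, hm, rfl⟩ := hys w ((hx0 1 le_rfl).1.trans hw.1) hw0
      exact ⟨m, hm, hw.1, hw.2⟩
    | succ i hi ih =>
      obtain ⟨m, hm, h1, h2⟩ := ih
      obtain ⟨w, hw, hw0⟩ := roll (i + 1) (by omega)
      obtain ⟨m', hm', rfl⟩ := hys w ((hx0 (i + 1) (by omega)).1.trans hw.1) hw0
      refine ⟨m', ?_, hw.1, hw.2⟩
      have : y m < y m' := h2.trans hw.1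
      have := (hym.lt_iff_lt (Set.mem_Ici.2 (by omega)) (Set.mem_Ici.2 hm')).1 this
      omega
  have gap : ∃ l, 0 ≤ l ∧ l < x k ∧ ∀ w ∈ Set.Ioo l (y k), g w ≠ 0 := by
    rcases Nat.lt_or_ge 1 k with h | h
    · obtain ⟨m, hm, h1, h2⟩ := idx (k - 1) (by omega)
      rw [Nat.sub_add_cancel hk] at h2
      have hle : y (k - 1) ≤ y m :=
        hym.monotoneOn (Set.mem_Ici.2 (by omega)) (Set.mem_Ici.2 (by omega)) hm
      refine ⟨y (k - 1), (hy0 (k - 1) (by omega)).1.le, by linarith, ?_⟩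
      intro w hw hw0
      obtain ⟨n, hn, rfl⟩ := hys w ((hy0 (k - 1) (by omega)).1.trans hw.1) hw0
      have a1 := (hym.lt_iff_lt (Set.mem_Ici.2 (by omega)) (Set.mem_Ici.2 hn)).1 hw.1
      have a2 := (hym.lt_iff_lt (Set.mem_Ici.2 hn) (Set.mem_Ici.2 hk)).1 hw.2
      omega
    · refine ⟨0, le_rfl, (hx0 k hk).1, ?_⟩
      intro w hw hw0
      obtain ⟨n, hn, rfl⟩ := hys w hw.1 hw0
      have a2 := (hym.lt_iff_lt (Set.mem_Ici.2 hn) (Set.mem_Ici.2 hk)).1 hw.2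
      omega
  obtain ⟨l, hl0, hl, hne⟩ := gap
  obtain ⟨hxk, hxk0⟩ := hx0 k hk
  obtain ⟨hyk, hyk0⟩ := hy0 k hk
  obtain ⟨hz1, hz2⟩ := hz
  rcases hz2.lt_or_eq with hlt | heq
  · refine ⟨Or.inr (hne z ⟨hl.trans_le hz1, hlt⟩), ?_⟩
    rcases hz1.lt_or_eq with h | h
    · obtain ⟨c, hc, t, ht, e⟩ := ab_mvt (g := fun z => -g z) hp hf hxk h
      have hs := ab_sign (g := g) (fun z hz => (hg z hz).continuousAt) (hxk.trans hc.1) hc.2.le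
        (fun w hw => hne w ⟨hl.trans (hc.1.trans_le hw.1), hw.2.trans_lt hlt⟩)
      have : f z = -(t * g c) := by rw [hxk0] at e; linarith
      rw [this]
      nlinarith
    · rw [← h, hxk0]; simp
  · rw [heq, hyk0]
    refine ⟨Or.inl ?_, by simp⟩
    intro h0
    exact ab_nocommon hp hq hf hg hl0 (hl.trans_le (hz1.trans hz2)) hne h0 hyk0

end abstractPart

theorem stmt3 (ν : ℝ) (hν : 1 ≤ ν) (k : ℕ) (hk : 1 ≤ k)
    (jm1 jn : ℕ → ℝ)
    (hjm1 : EnumPosZeros (besselJ (ν - 1)) jm1)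
    (hjn : EnumPosZeros (besselJ ν) jn) :
    ∀ z ∈ Set.Icc (jm1 k) (jn k), besselJ (ν - 1) z - besselJ ν z ≠ 0 := by
  intro z hz
  set f : ℝ → ℝ := fun z => bE (ν - 1) ((z / 2) ^ 2) with hfdef
  set g : ℝ → ℝ := fun z => ((z / 2) ^ 2) ^ ν * bE ν ((z / 2) ^ 2) with hgdef
  have hpow : ∀ z : ℝ, 0 < z → ((z / 2) ^ 2) ^ ν = (z / 2) ^ ν * (z / 2) ^ ν := by
    intro z hz
    rw [sq, Real.mul_rpow (by positivity) (by positivity)]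
  have hA : ∀ z, 0 < z → besselJ (ν - 1) z = (z / 2) ^ (ν - 1) * f z :=
    fun z hz => besselJ_eq _ z hz
  have hB : ∀ z, 0 < z → g z = (z / 2) ^ ν * besselJ ν z := by
    intro z hz
    rw [besselJ_eq _ z hz, hgdef]
    simp only
    rw [hpow z hz]; ring
  have hpp : ∀ (a z : ℝ), 0 < z → 0 < (z / 2) ^ a := fun a z hz => Real.rpow_pos_of_pos (by positivity) _
  have hx : EnumPosZeros f jm1 := by
    refine ⟨hjm1.1, fun i hi => ⟨(hjm1.2.1 i hi).1, ?_⟩, fun z hz h0 => hjm1.2.2 z hz ?_⟩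
    · have h := (hjm1.2.1 i hi).2
      rw [hA _ (hjm1.2.1 i hi).1] at h
      exact (mul_eq_zero.1 h).resolve_left (hpp _ _ (hjm1.2.1 i hi).1).ne'
    · rw [hA z hz, h0, mul_zero]
  have hy : EnumPosZeros g jn := by
    refine ⟨hjn.1, fun i hi => ⟨(hjn.2.1 i hi).1, ?_⟩, fun z hz h0 => hjn.2.2 z hz ?_⟩
    · rw [hB _ (hjn.2.1 i hi).1, (hjn.2.1 i hi).2, mul_zero]
    · rw [hB z hz] at h0
      exact (mul_eq_zero.1 h0).resolve_left (hpp _ _ hz).ne'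
  have hsq : ∀ z : ℝ, HasDerivAt (fun z : ℝ => (z / 2) ^ 2) (z / 2) z := by
    intro z
    have := ((hasDerivAt_id z).div_const 2).pow 2
    convert! this using 1
    simp; ring
  have hf : ∀ z, 0 < z → HasDerivAt f ((z / 2 / ((z / 2) ^ 2) ^ ν) * (-g z)) z := by
    intro z hz
    have h := (bE_deriv (ν - 1) (by linarith) ((z / 2) ^ 2)).comp z (hsq z)
    convert! h using 1
    have : (0 : ℝ) < ((z / 2) ^ 2) ^ ν := by positivity
    simp only [hgdef, sub_add_cancel]
    field_simp
  have hg : ∀ z, 0 < z → HasDerivAt g ((z / 2 * ((z / 2) ^ 2) ^ (ν - 1)) * f z) z := by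
    intro z hz
    have hs : (0 : ℝ) < (z / 2) ^ 2 := by positivity
    have h1 := (Real.hasDerivAt_rpow_const (p := ν) (Or.inl hs.ne')).mul
      (bE_deriv ν (by linarith) ((z / 2) ^ 2))
    have h := h1.comp z (hsq z)
    convert! h using 1
    simp only [hfdef]
    rw [bE_rec ν hν]
    have : ((z / 2) ^ 2) ^ ν = ((z / 2) ^ 2) ^ (ν - 1) * (z / 2) ^ 2 := by
      rw [← Real.rpow_add_one hs.ne', sub_add_cancel]
    rw [this]; ring
  have main := ab_main (fun z hz => by positivity) (fun z hz => by positivity) hf hg jm1 jn hx hy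
    k hk z hz
  have hz0 : 0 < z := (hx.2.1 k hk).1.trans_le hz.1
  intro h
  have heq : besselJ ν z = (z / 2) ^ (ν - 1) * f z := by rw [← hA z hz0]; linarith
  have hgz : g z = ((z / 2) ^ ν * (z / 2) ^ (ν - 1)) * f z := by rw [hB z hz0, heq]; ring
  have ht : 0 < (z / 2) ^ ν * (z / 2) ^ (ν - 1) := mul_pos (hpp _ _ hz0) (hpp _ _ hz0)
  obtain ⟨hne, hle⟩ := main
  have hfz : f z ≠ 0 := by
    intro h0
    rw [hgz, h0] at hne
    simp at hne
  rw [hgz] at hle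
  have : 0 < f z * f z := mul_self_pos.2 hfz
  nlinarith
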